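/- Let l ≥ 2 be an integer and let p ≥ 2 be an even integer. Then the supremum, over all finite real sequences b = (b_A)_{A∈Z_l} with ‖b‖ ≤ 1, of ‖Σ_{A∈Z_l} b_A w_A‖_p is at least (p! · μ_{l,p}(standard))^{1/p} / (2√3). -/

import Mathlib

/-!
Write `p = 2h`. The test sequence puts equal weight on all `l`-element subsets of `{1, …, N}`,
with `N = 2(hl)²`.

Since `sSup` is a junk value on unbounded sets, it is first shown that the norms are bounded
(`bddAbove_norms`). The moments of a Walsh polynomial equal those of the corresponding polynomial
on a finite sign cube (`integral_pow_eq`), because both integration and averaging over the cube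
kill all nonconstant characters. On the cube, a hypercontractive estimate is proved by induction on
the number of variables from a two-point inequality (`two_point`, `cube_moment_bound`).

For the lower bound, expand the `p`-th power of the sum over the `l`-subsets: the `p`-th moment
counts the `p`-tuples of `l`-subsets in which every point has even multiplicity (`cube_lower`). Each
isomorphism class of standard double-coverings supplies an orbit of such tuples under
`S_p × S_N`, and different classes supply disjoint orbits (`count_evenTuples`). An orbit has
`p! N!` divided by the order of a stabiliser `G` elements, so it remains to bound `#G`, which is
done by exposing the sets of the covering one at a time, component by component
(`stab_bound`, `orbit_bound`):

* As the covering is standard, an automorphism maps each component to itself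
  (`standard_reachable`), so the first exposed set of a component of size `m` has at most `m`
  possible images. The product of these sizes is at most `2 ^ p`.
* Any other set meets an already exposed set in a point, which lies in no third set; its image is
  thus forced.
* A set with `d` new points contributes at most `d!`, where `d! ^ l ≤ l! ^ d`. There are `hl`
  points in all, so this contributes at most `l! ^ h`.
* The points outside the covering contribute `(N - hl)!`.

Hence the number of even tuples is at least `μ p! N! / (2 ^ p l! ^ h (N - hl)!)`. The choice of `N`
makes this at least `p! μ (N choose l) ^ h / (2 · 2 ^ p)` (`count_choose`), and
`2 · 2 ^ p ≤ 12 ^ h = (2√3) ^ p`.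
-/

/-- The union of all member sets of a set-collection. -/
def unionC (C : Multiset (Finset ℕ)) : Finset ℕ := C.sup

/-- A set-collection is a double-covering if every point of its union lies in
exactly two member sets (counted with multiplicity). -/
def IsDoubleCover (C : Multiset (Finset ℕ)) : Prop :=
  ∀ a ∈ unionC C, Multiset.countP (fun A => a ∈ A) C = 2

/-- A set-collection is an even-covering if every point of its union lies in an
even number of member sets (counted with multiplicity). -/
def IsEvenCover (C : Multiset (Finset ℕ)) : Prop :=
  ∀ a ∈ unionC C, Even (Multiset.countP (fun A => a ∈ A) C)

/-- Two set-collections are isomorphic: there is a bijection between their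
unions mapping the first multiset of sets onto the second. -/
def Isomorphic (C D : Multiset (Finset ℕ)) : Prop :=
  ∃ φ : ℕ → ℕ, Set.BijOn φ ↑(unionC C) ↑(unionC D) ∧
    C.map (Finset.image φ) = D

/-- A set-collection is connected if any two member sets are joined by a chain
of member sets with consecutive nonempty intersections. -/
def ConnectedColl (C : Multiset (Finset ℕ)) : Prop :=
  ∀ A ∈ C, ∀ B ∈ C,
    Relation.ReflTransGen (fun X Y => X ∈ C ∧ Y ∈ C ∧ (X ∩ Y).Nonempty) A B

/-- `D` is a connected component of `C`: a nonempty connected sub-multiset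
separated from the rest of `C`. -/
def IsComponent (C D : Multiset (Finset ℕ)) : Prop :=
  D ≤ C ∧ D ≠ 0 ∧ ConnectedColl D ∧ ∀ B ∈ C - D, ∀ A ∈ D, B ∩ A = ∅

/-- A set-collection is standard if no two of its distinct connected components
are isomorphic. -/
def IsStandard (C : Multiset (Finset ℕ)) : Prop :=
  ∀ D E : Multiset (Finset ℕ),
    IsComponent C D → IsComponent C E → D ≠ E → ¬ Isomorphic D E

/-- `μ_{l,p}(full)`: the number of isomorphism classes of double-coverings of
`p` sets each of cardinality `l`. -/
noncomputable def muFull (l p : ℕ) : ℕ :=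
  Nat.card (Quot (fun C D : {C : Multiset (Finset ℕ) //
      Multiset.card C = p ∧ IsDoubleCover C ∧ ∀ A ∈ C, A.card = l} =>
    Isomorphic C.1 D.1))

/-- `μ_{l,p}(standard)`: the number of isomorphism classes of standard
double-coverings of `p` sets each of cardinality `l`. -/
noncomputable def muStandard (l p : ℕ) : ℕ :=
  Nat.card (Quot (fun C D : {C : Multiset (Finset ℕ) //
      Multiset.card C = p ∧ IsDoubleCover C ∧ IsStandard C ∧ ∀ A ∈ C, A.card = l} =>
    Isomorphic C.1 D.1))

/-- `μ*_{l,p}(full)`: the number of isomorphism classes of double-coverings of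
`p` sets each of cardinality between `1` and `l`. -/
noncomputable def muStarFull (l p : ℕ) : ℕ :=
  Nat.card (Quot (fun C D : {C : Multiset (Finset ℕ) //
      Multiset.card C = p ∧ IsDoubleCover C ∧ ∀ A ∈ C, 1 ≤ A.card ∧ A.card ≤ l} =>
    Isomorphic C.1 D.1))

/-- The family `D_{l,p}` of double-coverings of `p` sets of cardinality `l`
contained in `{1,…,pl/2}`. -/
def Dfull (l p : ℕ) : Set (Multiset (Finset ℕ)) :=
  {C | Multiset.card C = p ∧ IsDoubleCover C ∧
    (∀ A ∈ C, A ⊆ Finset.Icc 1 (p * l / 2)) ∧ ∀ A ∈ C, A.card = l}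

/-- The family `D*_{l,p}` of double-coverings of `p` sets of cardinality
between `1` and `l` contained in `{1,…,pl/2}`. -/
def Dstar (l p : ℕ) : Set (Multiset (Finset ℕ)) :=
  {C | Multiset.card C = p ∧ IsDoubleCover C ∧
    (∀ A ∈ C, A ⊆ Finset.Icc 1 (p * l / 2)) ∧ ∀ A ∈ C, 1 ≤ A.card ∧ A.card ≤ l}

/-- The Rademacher function `r_n(x) = sign (sin (2^n π x))`. -/
noncomputable def rademacher (n : ℕ) (x : ℝ) : ℝ :=
  Real.sign (Real.sin (2 ^ n * Real.pi * x))

/-- The Walsh function `w_A = ∏_{k ∈ A} r_k`. -/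
noncomputable def walsh (A : Finset ℕ) (x : ℝ) : ℝ :=
  ∏ k ∈ A, rademacher k x

/-! ### Characters of the sign cube and Walsh integrals -/

/-- The monomial `∏_{k ∈ A} s k` evaluated at a sequence `s`, used for sequences of signs. The
Walsh function `walsh A x` is the case `s k = rademacher k x`. -/
def signProd (s : ℕ → ℝ) (A : Finset ℕ) : ℝ := ∏ k ∈ A, s k

/-- The sign sequence equal to `-1` exactly on `X`; the subsets `X` of a finite set `T`
parametrise the points of the cube `{±1}^T`. -/
def cubeSign (X : Finset ℕ) (k : ℕ) : ℝ := if k ∈ X then -1 else 1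

lemma cubeSign_mul_self (X : Finset ℕ) (k : ℕ) : cubeSign X k * cubeSign X k = 1 := by
  unfold cubeSign; split_ifs <;> norm_num

lemma signProd_mul {s : ℕ → ℝ} (hs : ∀ k, s k * s k = 1) (A B : Finset ℕ) :
    signProd s A * signProd s B = signProd s (symmDiff A B) := by
  unfold signProd
  have h1 : ∏ k ∈ A, s k = (∏ k ∈ A \ B, s k) * ∏ k ∈ A ∩ B, s k := by
    rw [← Finset.prod_union (Finset.disjoint_sdiff_inter A B), Finset.sdiff_union_inter]
  have h2 : ∏ k ∈ B, s k = (∏ k ∈ B \ A, s k) * ∏ k ∈ A ∩ B, s k := by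
    rw [Finset.inter_comm, ← Finset.prod_union (Finset.disjoint_sdiff_inter B A),
      Finset.sdiff_union_inter]
  have h3 : (∏ k ∈ A ∩ B, s k) * ∏ k ∈ A ∩ B, s k = 1 := by
    rw [← Finset.prod_mul_distrib]
    exact Finset.prod_eq_one fun k _ => hs k
  have h4 : ∏ k ∈ symmDiff A B, s k = (∏ k ∈ A \ B, s k) * ∏ k ∈ B \ A, s k := by
    rw [← Finset.prod_union disjoint_sdiff_sdiff]; rfl
  rw [h1, h2, h4]
  linear_combination ((∏ k ∈ A \ B, s k) * ∏ k ∈ B \ A, s k) * h3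

/-- A product of monomials in signs is again a monomial, and its index set does not depend on
the signs. -/
lemma exists_prod_signProd (T : Finset ℕ) {ι : Type*} (I : Finset ι) (t : ι → Finset ℕ)
    (ht : ∀ i ∈ I, t i ⊆ T) :
    ∃ J ⊆ T, ∀ s : ℕ → ℝ, (∀ k, s k * s k = 1) → ∏ i ∈ I, signProd s (t i) = signProd s J := by
  classical
  induction I using Finset.induction_on with
  | empty => exact ⟨∅, by simp, fun s _ => by simp [signProd]⟩
  | insert i I hi ih =>
    obtain ⟨J, hJ, h⟩ := ih fun j hj => ht j (Finset.mem_insert_of_mem hj)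
    refine ⟨symmDiff (t i) J, ?_, fun s hs => ?_⟩
    · intro k hk
      rcases Finset.mem_symmDiff.1 hk with h | h
      · exact ht i (Finset.mem_insert_self _ _) h.1
      · exact hJ h.1
    · rw [Finset.prod_insert hi, h s hs, signProd_mul hs]

lemma sum_cube_signProd {T J : Finset ℕ} (hJ : J ⊆ T) :
    ∑ X ∈ T.powerset, signProd (cubeSign X) J = if J = ∅ then 2 ^ T.card else 0 := by
  split_ifs with h
  · subst h; simp [signProd]
  · obtain ⟨a, ha⟩ := Finset.nonempty_iff_ne_empty.2 h
    have : ∀ X ∈ T.powerset,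
        signProd (cubeSign X) J = ∏ k ∈ X, (if k ∈ J then (-1 : ℝ) else 1) := by
      intro X _
      unfold signProd cubeSign
      rw [Finset.prod_ite_mem, Finset.prod_ite_mem, Finset.inter_comm]
    rw [Finset.sum_congr rfl this, ← Finset.prod_one_add]
    exact Finset.prod_eq_zero (hJ ha) (by simp [ha])

lemma measurable_rademacher (n : ℕ) : Measurable (rademacher n) := by
  have h : Measurable Real.sign := by
    unfold Real.sign
    exact Measurable.ite measurableSet_Iio measurable_const
      (Measurable.ite measurableSet_Ioi measurable_const measurable_const)
  unfold rademacher
  exact h.comp (by fun_prop)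

lemma abs_rademacher_le (n : ℕ) (x : ℝ) : |rademacher n x| ≤ 1 := by
  unfold rademacher
  rcases Real.sign_apply_eq (Real.sin (2 ^ n * Real.pi * x)) with h | h | h <;> simp [h]

lemma rademacher_mul_self {x : ℝ} (hx : Irrational x) (n : ℕ) :
    rademacher n x * rademacher n x = 1 := by
  have h0 : Real.sin (2 ^ n * Real.pi * x) ≠ 0 := by
    intro h
    obtain ⟨m, hm⟩ := Real.sin_eq_zero_iff.1 h
    have h1 : (m : ℝ) = 2 ^ n * x := by
      have := Real.pi_ne_zero
      have h2 : (m : ℝ) * Real.pi = (2 ^ n * x) * Real.pi := by rw [hm]; ring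
      exact mul_right_cancel₀ this h2
    apply hx
    refine ⟨(m : ℚ) / 2 ^ n, ?_⟩
    push_cast
    rw [h1]; field_simp
  unfold rademacher
  rcases lt_or_gt_of_ne h0 with h | h
  · rw [Real.sign_of_neg h]; norm_num
  · rw [Real.sign_of_pos h]; norm_num

lemma measurable_walsh (A : Finset ℕ) : Measurable (walsh A) := by
  have : walsh A = fun x => ∏ k ∈ A, rademacher k x := rfl
  rw [this]
  exact Finset.measurable_prod _ fun k _ => measurable_rademacher k

lemma abs_walsh_le (A : Finset ℕ) (x : ℝ) : |walsh A x| ≤ 1 := by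
  unfold walsh
  rw [Finset.abs_prod]
  exact Finset.prod_le_one (fun _ _ => abs_nonneg _) fun k _ => abs_rademacher_le k x

lemma rademacher_add_of_lt {n k : ℕ} (h : n < k) (x : ℝ) :
    rademacher k (x + 1 / 2 ^ n) = rademacher k x := by
  obtain ⟨d, rfl⟩ := Nat.exists_eq_add_of_lt h
  unfold rademacher
  congr 1
  have : (2 : ℝ) ^ (n + d + 1) * Real.pi * (x + 1 / 2 ^ n)
      = 2 ^ (n + d + 1) * Real.pi * x + ((2 ^ d : ℕ) : ℝ) * (2 * Real.pi) := by
    push_cast; field_simp; ring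
  rw [this, Real.sin_add_nat_mul_two_pi]

lemma rademacher_add_self (n : ℕ) (x : ℝ) :
    rademacher n (x + 1 / 2 ^ n) = - rademacher n x := by
  unfold rademacher
  have : (2 : ℝ) ^ n * Real.pi * (x + 1 / 2 ^ n) = 2 ^ n * Real.pi * x + Real.pi := by
    field_simp
  rw [this, Real.sin_add_pi, Real.sign_neg]

/-- With `n` the least element of `A`, translation by `2⁻ⁿ` changes the sign of `walsh A`, which
is `1`-periodic, so its integral over a period vanishes. -/
lemma integral_walsh {A : Finset ℕ} (hA : 0 ∉ A) :
    ∫ x in (0:ℝ)..1, walsh A x = if A = ∅ then 1 else 0 := by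
  split_ifs with h
  · subst h; simp [walsh]
  · have hne := Finset.nonempty_iff_ne_empty.2 h
    set n := A.min' hne with hn
    have hnA : n ∈ A := A.min'_mem hne
    have hshift : ∀ x, walsh A (x + 1 / 2 ^ n) = - walsh A x := by
      intro x
      unfold walsh
      rw [← Finset.mul_prod_erase A _ hnA, ← Finset.mul_prod_erase A (fun k => rademacher k x) hnA,
        rademacher_add_self, neg_mul]
      congr 2
      refine Finset.prod_congr rfl fun k hk => rademacher_add_of_lt ?_ x
      exact lt_of_le_of_ne (A.min'_le k (Finset.mem_of_mem_erase hk))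
        (Finset.ne_of_mem_erase hk).symm
    have hper : Function.Periodic (walsh A) 1 := by
      intro x
      unfold walsh
      refine Finset.prod_congr rfl fun k hk => ?_
      have hk0 : 0 < k := Nat.pos_of_ne_zero fun h => hA (h ▸ hk)
      simpa using rademacher_add_of_lt hk0 x
    have h1 : ∫ x in (0:ℝ)..1, walsh A (x + 1 / 2 ^ n) = ∫ x in (0:ℝ)..1, walsh A x := by
      rw [intervalIntegral.integral_comp_add_right (walsh A)]
      have := hper.intervalIntegral_add_eq (1 / 2 ^ n) 0
      rw [zero_add] at this
      rw [zero_add, add_comm, this]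
    simp_rw [hshift] at h1
    rw [intervalIntegral.integral_neg] at h1
    linarith

/-- The moments of a Walsh polynomial are those of the corresponding polynomial on the cube. -/
lemma integral_pow_eq (T : Finset ℕ) (hT : 0 ∉ T) (S : Finset (Finset ℕ))
    (hS : ∀ A ∈ S, A ⊆ T) (b : Finset ℕ → ℝ) (p : ℕ) :
    ∫ x in (0:ℝ)..1, (∑ A ∈ S, b A * walsh A x) ^ p =
      (∑ X ∈ T.powerset, (∑ A ∈ S, b A * signProd (cubeSign X) A) ^ p) / 2 ^ T.card := by
  have hexp : ∀ s : ℕ → ℝ, (∑ A ∈ S, b A * signProd s A) ^ p =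
      ∑ t ∈ Fintype.piFinset (fun _ : Fin p => S), (∏ i, b (t i)) * ∏ i, signProd s (t i) := by
    intro s
    rw [Finset.sum_pow']
    simp_rw [Finset.prod_mul_distrib]
  have hw : ∀ x, (∑ A ∈ S, b A * walsh A x) ^ p =
      ∑ t ∈ Fintype.piFinset (fun _ : Fin p => S), (∏ i, b (t i)) * ∏ i, walsh (t i) x :=
    fun x => hexp fun k => rademacher k x
  simp_rw [hw, hexp]
  rw [Finset.sum_comm, Finset.sum_div, intervalIntegral.integral_finsetSum]
  · refine Finset.sum_congr rfl fun t ht => ?_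
    obtain ⟨J, hJ, h⟩ := exists_prod_signProd T Finset.univ t
      fun i _ => hS _ (Fintype.mem_piFinset.1 ht i)
    rw [intervalIntegral.integral_const_mul, ← Finset.mul_sum, mul_div_assoc]
    congr 1
    have h1 : ∫ x in (0:ℝ)..1, ∏ i, walsh (t i) x = ∫ x in (0:ℝ)..1, walsh J x := by
      apply intervalIntegral.integral_congr_ae
      have hirr : ∀ᵐ x : ℝ, Irrational x := (Set.countable_range ((↑) : ℚ → ℝ)).ae_notMem _
      filter_upwards [hirr] with x hx _
      exact h (fun k => rademacher k x) (rademacher_mul_self hx)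
    rw [h1, integral_walsh (fun h0 => hT (hJ h0)),
      Finset.sum_congr rfl fun X _ => h (cubeSign X) (cubeSign_mul_self X), sum_cube_signProd hJ]
    split_ifs <;> simp
  · intro t _
    have hm : Measurable fun x => (∏ i, b (t i)) * ∏ i, walsh (t i) x :=
      (Finset.measurable_prod _ fun i _ => measurable_walsh (t i)).const_mul _
    have hb : ∀ x, ‖(∏ i, b (t i)) * ∏ i, walsh (t i) x‖ ≤ ‖∏ i, b (t i)‖ := by
      intro x
      rw [norm_mul]
      refine mul_le_of_le_one_right (norm_nonneg _) ?_
      rw [Real.norm_eq_abs, Finset.abs_prod]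
      exact Finset.prod_le_one (fun _ _ => abs_nonneg _) fun i _ => abs_walsh_le _ x
    rw [intervalIntegrable_iff]
    exact MeasureTheory.Measure.integrableOn_of_bounded (by simp) hm.aestronglyMeasurable
      (Filter.Eventually.of_forall hb)

/-! ### Uniform bound on the moments -/

/-- Two-point inequality: `((g+h)^{2m} + (g-h)^{2m})/2 ≤ (g² + c h²)^m` once `c ≥ 4M+1` and
`m ≤ M`. The second conjunct controls the odd part in the induction on `m`. -/
lemma two_point (g h c : ℝ) (M : ℕ) (hc : 4 * M + 1 ≤ c) (m : ℕ) (hm : m ≤ M) :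
    (g + h) ^ (2 * m) + (g - h) ^ (2 * m) ≤ 2 * (g ^ 2 + c * h ^ 2) ^ m ∧
    g * h * ((g + h) ^ (2 * m) - (g - h) ^ (2 * m)) ≤
      4 * m * h ^ 2 * (g ^ 2 + c * h ^ 2) ^ m := by
  have hM : (0 : ℝ) ≤ M := Nat.cast_nonneg M
  induction m with
  | zero => norm_num
  | succ m ih =>
    obtain ⟨h1, h2⟩ := ih (by omega)
    have hmM : (m : ℝ) + 1 ≤ M := by exact_mod_cast hm
    have hm0 : (0 : ℝ) ≤ m := Nat.cast_nonneg m
    have hW : 0 ≤ (g ^ 2 + c * h ^ 2) ^ m := by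
      have : 0 ≤ c := by linarith
      positivity
    set W := g ^ 2 + c * h ^ 2 with hWdef
    have e1 : (g + h) ^ (2 * (m + 1)) = (g + h) ^ (2 * m) * (g + h) ^ 2 := by ring
    have e2 : (g - h) ^ (2 * (m + 1)) = (g - h) ^ (2 * m) * (g - h) ^ 2 := by ring
    rw [e1, e2, pow_succ W m]
    set P := (g + h) ^ (2 * m)
    set Q := (g - h) ^ (2 * m)
    have hs : 0 ≤ g ^ 2 + h ^ 2 := by positivity
    have hsW : g ^ 2 + h ^ 2 ≤ W := by
      rw [hWdef]; nlinarith [sq_nonneg h]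
    have i1 := mul_le_mul_of_nonneg_left h1 hs
    have i2 := mul_le_mul_of_nonneg_left h2 hs
    have i3 := mul_le_mul_of_nonneg_left h1 (show 0 ≤ 2 * (g ^ 2 * h ^ 2) by positivity)
    have hgW : g ^ 2 ≤ W := by rw [hWdef]; nlinarith [sq_nonneg h]
    have hc4 : g ^ 2 + h ^ 2 + 4 * m * h ^ 2 ≤ W := by
      rw [hWdef]; nlinarith [sq_nonneg h]
    push_cast
    constructor
    · have := mul_le_mul_of_nonneg_right hc4 hW
      nlinarith
    · have j1 := mul_le_mul_of_nonneg_right hsW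
        (show 0 ≤ 4 * m * h ^ 2 * W ^ m by positivity)
      have j2 := mul_le_mul_of_nonneg_right hgW (show 0 ≤ 4 * h ^ 2 * W ^ m by positivity)
      nlinarith

lemma signProd_cube_insert {T A X : Finset ℕ} {k : ℕ} (hk : k ∉ T) (hA : A ⊆ T) :
    signProd (cubeSign (insert k X)) A = signProd (cubeSign X) A := by
  refine Finset.prod_congr rfl fun j hj => ?_
  have : j ≠ k := fun h => hk (h ▸ hA hj)
  simp [cubeSign, this]

/-- Hypercontractive moment bound, by induction on the number of variables: writing a polynomial
as `g + r_k h`, the two-point inequality and Minkowski's inequality in `ℓ^m` give the step. -/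
lemma cube_moment_bound (m : ℕ) (hm : 1 ≤ m) (c : ℝ) (hc : 4 * m + 1 ≤ c) (T : Finset ℕ) :
    ∀ b : Finset ℕ → ℝ,
      (∑ X ∈ T.powerset, ((∑ A ∈ T.powerset, b A * signProd (cubeSign X) A) ^ 2) ^ (m : ℝ))
          ^ (1 / (m : ℝ)) ≤
        (2 ^ T.card : ℝ) ^ (1 / (m : ℝ)) * ∑ A ∈ T.powerset, c ^ A.card * b A ^ 2 := by
  have hm0 : (m : ℝ) ≠ 0 := by positivity
  have hm1 : (1 : ℝ) ≤ m := by exact_mod_cast hm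
  have hc0 : 0 ≤ c := by linarith
  induction T using Finset.induction_on with
  | empty =>
    intro b
    simp only [Finset.powerset_empty, Finset.sum_singleton, Finset.card_empty, pow_zero, one_mul,
      Real.one_rpow]
    rw [← Real.rpow_mul (sq_nonneg _), mul_one_div_cancel hm0]
    simp [signProd]
  | insert k T hk ih =>
    intro b
    set g : Finset ℕ → ℝ := fun X => ∑ A ∈ T.powerset, b A * signProd (cubeSign X) A with hg
    set h : Finset ℕ → ℝ := fun X => ∑ A ∈ T.powerset, b (insert k A) * signProd (cubeSign X) A
      with hh
    have e1 : ∀ X ∈ T.powerset,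
        ∑ A ∈ (insert k T).powerset, b A * signProd (cubeSign X) A = g X + h X := by
      intro X hX
      rw [Finset.sum_powerset_insert hk, hg, hh]
      congr 1
      refine Finset.sum_congr rfl fun A hA => ?_
      have hkA : k ∉ A := fun h => hk (Finset.mem_powerset.1 hA h)
      have hkX : k ∉ X := fun h => hk (Finset.mem_powerset.1 hX h)
      simp [signProd, Finset.prod_insert hkA, cubeSign, hkX]
    have e2 : ∀ X ∈ T.powerset,
        ∑ A ∈ (insert k T).powerset, b A * signProd (cubeSign (insert k X)) A = g X - h X := by
      intro X hX
      rw [Finset.sum_powerset_insert hk, hg, hh, sub_eq_add_neg, ← Finset.sum_neg_distrib]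
      congr 1
      · refine Finset.sum_congr rfl fun A hA => ?_
        rw [signProd_cube_insert hk (Finset.mem_powerset.1 hA)]
      · refine Finset.sum_congr rfl fun A hA => ?_
        have hkA : k ∉ A := fun h => hk (Finset.mem_powerset.1 hA h)
        have h1 := signProd_cube_insert (X := X) hk (Finset.mem_powerset.1 hA)
        have h2 : signProd (cubeSign (insert k X)) (insert k A)
            = cubeSign (insert k X) k * signProd (cubeSign (insert k X)) A := by
          simp [signProd, Finset.prod_insert hkA]
        rw [h2, h1]
        simp [cubeSign]
    have e3 : ∑ X ∈ (insert k T).powerset,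
        ((∑ A ∈ (insert k T).powerset, b A * signProd (cubeSign X) A) ^ 2) ^ (m : ℝ) ≤
        2 * ∑ X ∈ T.powerset, (g X ^ 2 + c * h X ^ 2) ^ (m : ℝ) := by
      rw [Finset.sum_powerset_insert hk, ← Finset.sum_add_distrib, Finset.mul_sum]
      refine Finset.sum_le_sum fun X hX => ?_
      rw [e1 X hX, e2 X hX]
      simp only [Real.rpow_natCast, ← pow_mul]
      exact (two_point (g X) (h X) c m hc m le_rfl).1
    have e4 := Real.Lp_add_le_of_nonneg T.powerset (f := fun X => g X ^ 2)
      (g := fun X => c * h X ^ 2) hm1 (fun X _ => sq_nonneg _)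
      (fun X _ => mul_nonneg hc0 (sq_nonneg _))
    have e5 : (∑ X ∈ T.powerset, (c * h X ^ 2) ^ (m : ℝ)) ^ (1 / (m : ℝ)) =
        c * (∑ X ∈ T.powerset, (h X ^ 2) ^ (m : ℝ)) ^ (1 / (m : ℝ)) := by
      have : ∀ X ∈ T.powerset, (c * h X ^ 2) ^ (m : ℝ) = c ^ (m : ℝ) * (h X ^ 2) ^ (m : ℝ) :=
        fun X _ => Real.mul_rpow hc0 (sq_nonneg _)
      rw [Finset.sum_congr rfl this, ← Finset.mul_sum, Real.mul_rpow (by positivity)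
        (Finset.sum_nonneg fun X _ => by positivity), ← Real.rpow_mul hc0,
        mul_one_div_cancel hm0, Real.rpow_one]
    have i1 := ih b
    have i2 := ih fun A => b (insert k A)
    have e6 : ∑ A ∈ (insert k T).powerset, c ^ A.card * b A ^ 2 =
        (∑ A ∈ T.powerset, c ^ A.card * b A ^ 2) +
          c * ∑ A ∈ T.powerset, c ^ A.card * b (insert k A) ^ 2 := by
      rw [Finset.sum_powerset_insert hk, Finset.mul_sum]
      congr 1
      refine Finset.sum_congr rfl fun A hA => ?_
      have hkA : k ∉ A := fun h => hk (Finset.mem_powerset.1 hA h)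
      rw [Finset.card_insert_of_notMem hkA]; ring
    rw [e6, Finset.card_insert_of_notMem hk]
    calc _ ≤ (2 * ∑ X ∈ T.powerset, (g X ^ 2 + c * h X ^ 2) ^ (m : ℝ)) ^ (1 / (m : ℝ)) :=
          Real.rpow_le_rpow (Finset.sum_nonneg fun X _ => by positivity) e3 (by positivity)
      _ = 2 ^ (1 / (m : ℝ)) *
          (∑ X ∈ T.powerset, (g X ^ 2 + c * h X ^ 2) ^ (m : ℝ)) ^ (1 / (m : ℝ)) :=
          Real.mul_rpow (by norm_num) (Finset.sum_nonneg fun X _ => by positivity)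
      _ ≤ 2 ^ (1 / (m : ℝ)) * ((2 ^ T.card : ℝ) ^ (1 / (m : ℝ)) *
          ((∑ A ∈ T.powerset, c ^ A.card * b A ^ 2) +
          c * ∑ A ∈ T.powerset, c ^ A.card * b (insert k A) ^ 2)) := by
          refine mul_le_mul_of_nonneg_left ?_ (by positivity)
          refine e4.trans ?_
          rw [e5, mul_add]
          have := mul_le_mul_of_nonneg_left i2 hc0
          refine add_le_add i1 (this.trans (le_of_eq (by ring)))
      _ = _ := by
          rw [← mul_assoc, ← Real.mul_rpow (by norm_num) (by positivity)]
          congr 2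
          ring

/-- The norms of Walsh chaoses of degree `l` with `‖b‖ ≤ 1` are bounded by a constant depending
only on `l` and `p`, so that the supremum in question is a genuine one. -/
lemma bddAbove_norms (l p : ℕ) (hp : 2 ≤ p) (hpe : Even p) :
    BddAbove {y : ℝ | ∃ (S : Finset (Finset ℕ)) (b : Finset ℕ → ℝ),
        (∀ A ∈ S, A.card = l ∧ ∀ n ∈ A, 1 ≤ n) ∧
        (∑ A ∈ S, (b A) ^ 2) ≤ 1 ∧
        y = (∫ x in (0:ℝ)..1, |∑ A ∈ S, b A * walsh A x| ^ p) ^ ((1 : ℝ) / p)} := by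
  obtain ⟨m, rfl⟩ := even_iff_two_dvd.1 hpe
  have hm : 1 ≤ m := by omega
  have hm0 : (m : ℝ) ≠ 0 := by positivity
  set c : ℝ := 4 * m + 1 with hc
  have hc0 : 0 ≤ c := by positivity
  refine ⟨((c ^ l) ^ (m : ℝ)) ^ ((1 : ℝ) / (2 * m : ℕ)), ?_⟩
  rintro y ⟨S, b, hS, hb, rfl⟩
  set T := S.biUnion id with hT
  have hT0 : 0 ∉ T := by
    intro h
    obtain ⟨A, hA, h0⟩ := Finset.mem_biUnion.1 h
    have := (hS A hA).2 0 h0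
    omega
  have hST : ∀ A ∈ S, A ⊆ T := fun A hA => Finset.subset_biUnion_of_mem id hA
  have habs : ∀ x, |∑ A ∈ S, b A * walsh A x| ^ (2 * m) = (∑ A ∈ S, b A * walsh A x) ^ (2 * m) :=
    fun x => (even_two_mul m).pow_abs _
  simp_rw [habs]
  rw [integral_pow_eq T hT0 S hST b]
  set b' : Finset ℕ → ℝ := fun A => if A ∈ S then b A else 0 with hb'
  have hSP : S ⊆ T.powerset := fun A hA => Finset.mem_powerset.2 (hST A hA)
  have h1 : ∀ X, ∑ A ∈ S, b A * signProd (cubeSign X) A =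
      ∑ A ∈ T.powerset, b' A * signProd (cubeSign X) A := by
    intro X
    rw [← Finset.sum_subset hSP]
    · exact Finset.sum_congr rfl fun A hA => by simp [hb', hA]
    · intro A _ hA; simp [hb', hA]
  have h2 : ∑ A ∈ T.powerset, c ^ A.card * b' A ^ 2 ≤ c ^ l := by
    rw [← Finset.sum_subset hSP]
    · have : ∀ A ∈ S, c ^ A.card * b' A ^ 2 = c ^ l * b A ^ 2 := by
        intro A hA; simp [hb', hA, (hS A hA).1]
      rw [Finset.sum_congr rfl this, ← Finset.mul_sum]
      exact mul_le_of_le_one_right (by positivity) hb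
    · intro A _ hA; simp [hb', hA]
  have h3 := (cube_moment_bound m hm c le_rfl T b').trans
    (mul_le_mul_of_nonneg_left h2 (by positivity))
  set Y := ∑ X ∈ T.powerset, ((∑ A ∈ T.powerset, b' A * signProd (cubeSign X) A) ^ 2) ^ (m : ℝ)
    with hY
  have hY0 : 0 ≤ Y := Finset.sum_nonneg fun X _ => by positivity
  have h4 : Y ≤ 2 ^ T.card * (c ^ l) ^ (m : ℝ) := by
    have := Real.rpow_le_rpow (z := (m : ℝ)) (by positivity) h3 (by positivity)
    rwa [← Real.rpow_mul hY0, one_div_mul_cancel hm0, Real.rpow_one,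
      Real.mul_rpow (by positivity) (by positivity), ← Real.rpow_mul (by positivity),
      one_div_mul_cancel hm0, Real.rpow_one] at this
  have h5 : ∑ X ∈ T.powerset, (∑ A ∈ S, b A * signProd (cubeSign X) A) ^ (2 * m) = Y := by
    refine Finset.sum_congr rfl fun X _ => ?_
    rw [h1, Real.rpow_natCast, pow_mul]
  rw [h5]
  refine Real.rpow_le_rpow (by positivity) ?_ (by positivity)
  rw [div_le_iff₀ (by positivity)]
  linarith

/-! ### Automorphisms of a double-covering -/

section Automorphisms

open Finset

/-- If the fibres of `f` on `H` are, up to left translation, contained in `K`, then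
`#H ≤ #K * #f(H)`. -/
lemma card_le_of_translate {G X : Type*} [Group G] [DecidableEq G] [DecidableEq X]
    (H K : Finset G) (f : G → X)
    (h : ∀ g ∈ H, ∀ g₀ ∈ H, f g = f g₀ → g₀⁻¹ * g ∈ K) :
    H.card ≤ K.card * (H.image f).card := by
  refine Finset.card_le_mul_card_image H _ fun b hb => ?_
  obtain ⟨g₀, hg₀, rfl⟩ := Finset.mem_image.1 hb
  refine Finset.card_le_card_of_injOn (fun g => g₀⁻¹ * g) ?_ ?_
  · intro g hg
    have hg := Finset.mem_filter.1 (Finset.mem_coe.1 hg)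
    exact h g hg.1 g₀ hg₀ hg.2
  · intro a _ b _ hab
    exact mul_left_cancel hab

variable {ι α κ : Type*} [Fintype ι] [DecidableEq ι] [Fintype α] [DecidableEq α] [DecidableEq κ]

/-- The automorphisms of the family `T` (pairs of a permutation of the indices and a compatible
permutation of the points) which fix every index in `S` and every point of the sets `T j`,
`j ∈ S`. -/
def stab (T : ι → Finset α) (S : Finset ι) : Finset (Equiv.Perm ι × Equiv.Perm α) :=
  univ.filter fun g => (∀ j, (T j).image g.2 = T (g.1 j)) ∧
    ∀ j ∈ S, g.1 j = j ∧ ∀ x ∈ T j, g.2 x = x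

lemma mem_stab {T : ι → Finset α} {S : Finset ι} {g : Equiv.Perm ι × Equiv.Perm α} :
    g ∈ stab T S ↔ (∀ j, (T j).image g.2 = T (g.1 j)) ∧
      ∀ j ∈ S, g.1 j = j ∧ ∀ x ∈ T j, g.2 x = x := by
  simp [stab]

lemma stab_inv_mul {T : ι → Finset α} {S : Finset ι} {g g₀ : Equiv.Perm ι × Equiv.Perm α}
    (hg : g ∈ stab T S) (hg₀ : g₀ ∈ stab T S) : g₀⁻¹ * g ∈ stab T S := by
  rw [mem_stab] at *
  refine ⟨fun j => ?_, fun j hj => ?_⟩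
  · have h1 := hg.1 j
    have h2 := hg₀.1 (g₀.1⁻¹ (g.1 j))
    have e0 : g₀.1 (g₀.1⁻¹ (g.1 j)) = g.1 j := g₀.1.apply_symm_apply _
    rw [e0, ← h1] at h2
    have h3 := congrArg (Finset.image (g₀.2⁻¹ : Equiv.Perm α)) h2
    rw [Finset.image_image, Finset.image_image] at h3
    have e1 : ((g₀.2⁻¹ : Equiv.Perm α) : α → α) ∘ g₀.2 = id := by
      funext x; simp
    rw [e1, Finset.image_id] at h3
    exact h3.symm
  · refine ⟨?_, fun x hx => ?_⟩
    · change g₀.1⁻¹ (g.1 j) = j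
      rw [(hg.2 j hj).1, Equiv.Perm.inv_eq_iff_eq, (hg₀.2 j hj).1]
    · change g₀.2⁻¹ (g.2 x) = x
      rw [(hg.2 j hj).2 x hx, Equiv.Perm.inv_eq_iff_eq, (hg₀.2 j hj).2 x hx]

/-- Fixing one further set `T v` costs at most the number of possible images of `v` times the
number of permutations of the points of `T v` that are not fixed yet. -/
lemma stab_step (T : ι → Finset α) (S : Finset ι) (v : ι) (Q : Finset ι)
    (hQ : ∀ g ∈ stab T S, g.1 v ∈ Q) :
    (stab T S).card ≤
      Q.card * (T v \ S.biUnion T).card.factorial * (stab T (insert v S)).card := by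
  set D := T v \ S.biUnion T with hD
  set H' := (stab T S).filter fun g => g.1 v = v with hH'
  have h1 : (stab T S).card ≤ H'.card * ((stab T S).image fun g => g.1 v).card := by
    refine card_le_of_translate _ _ _ fun g hg g₀ hg₀ h => ?_
    refine mem_filter.2 ⟨stab_inv_mul hg hg₀, ?_⟩
    change g₀.1⁻¹ (g.1 v) = v
    rw [Equiv.Perm.inv_eq_iff_eq]; exact h
  have h2 : ((stab T S).image fun g => g.1 v).card ≤ Q.card :=
    card_le_card fun u hu => by
      obtain ⟨g, hg, rfl⟩ := mem_image.1 hu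
      exact hQ g hg
  have h3 : H'.card ≤ (stab T (insert v S)).card *
      (H'.image fun g => fun x : {x // x ∈ D} => g.2 x).card := by
    refine card_le_of_translate _ _ _ fun g hg g₀ hg₀ h => ?_
    obtain ⟨hg, hgv⟩ := mem_filter.1 hg
    obtain ⟨hg₀, hgv₀⟩ := mem_filter.1 hg₀
    have hmem := mem_stab.1 (stab_inv_mul hg hg₀)
    refine mem_stab.2 ⟨hmem.1, fun j hj => ?_⟩
    rcases mem_insert.1 hj with rfl | hj
    · refine ⟨?_, fun x hx => ?_⟩
      · change g₀.1⁻¹ (g.1 j) = j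
        rw [hgv, Equiv.Perm.inv_eq_iff_eq, hgv₀]
      · by_cases hxS : x ∈ S.biUnion T
        · obtain ⟨i, hi, hxi⟩ := mem_biUnion.1 hxS
          exact (hmem.2 i hi).2 x hxi
        · have := congrFun h ⟨x, mem_sdiff.2 ⟨hx, hxS⟩⟩
          change g₀.2⁻¹ (g.2 x) = x
          rw [Equiv.Perm.inv_eq_iff_eq]; exact this
    · exact hmem.2 j hj
  have h4 : (H'.image fun g => fun x : {x // x ∈ D} => g.2 x).card ≤ D.card.factorial := by
    have hsub : (H'.image fun g => fun x : {x // x ∈ D} => g.2 x) ⊆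
        (univ : Finset (Equiv.Perm {x // x ∈ D})).image fun e => fun x => ((e x : _) : α) := by
      intro f hf
      obtain ⟨g, hg, rfl⟩ := mem_image.1 hf
      obtain ⟨hg, hgv⟩ := mem_filter.1 hg
      have hg := mem_stab.1 hg
      have hTv : ∀ x, g.2 x ∈ T v ↔ x ∈ T v := by
        intro x
        have := hg.1 v
        rw [hgv] at this
        conv_lhs => rw [← this]
        simp
      have hfix : ∀ x ∈ S.biUnion T, g.2 x = x := by
        intro x hx
        obtain ⟨i, hi, hxi⟩ := mem_biUnion.1 hx
        exact (hg.2 i hi).2 x hxi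
      have hTS : ∀ x, g.2 x ∈ S.biUnion T ↔ x ∈ S.biUnion T := by
        intro x
        constructor
        · intro h
          have : g.2 x = x := g.2.injective (hfix _ h)
          rwa [this] at h
        · intro h
          rwa [hfix x h]
      have hDD : ∀ x, g.2 x ∈ D ↔ x ∈ D := by
        intro x
        rw [hD, mem_sdiff, mem_sdiff, hTv, hTS]
      exact mem_image.2 ⟨g.2.subtypePerm hDD, mem_univ _, rfl⟩
    refine (card_le_card hsub).trans (card_image_le.trans ?_)
    rw [card_univ, Fintype.card_perm, Fintype.card_coe]
  calc (stab T S).card ≤ H'.card * Q.card := h1.trans (Nat.mul_le_mul_left _ h2)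
    _ ≤ ((stab T (insert v S)).card * D.card.factorial) * Q.card :=
        Nat.mul_le_mul_right _ (h3.trans (Nat.mul_le_mul_left _ h4))
    _ = _ := by ring

lemma card_stab_univ (T : ι → Finset α) :
    (stab T univ).card ≤ (Fintype.card α - (univ.biUnion T).card).factorial := by
  set U := univ.biUnion T with hU
  have h1 : (stab T univ).card ≤
      Fintype.card {f : Equiv.Perm α // ∀ a, ¬ (a ∉ U) → f a = a} := by
    rw [Fintype.card_subtype]
    refine card_le_card_of_injOn (fun g => g.2) ?_ ?_
    · intro g hg
      have hg := mem_stab.1 (mem_coe.1 hg)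
      refine mem_coe.2 (mem_filter.2 ⟨mem_univ _, fun a ha => ?_⟩)
      obtain ⟨i, hi, hai⟩ := mem_biUnion.1 (not_not.1 ha)
      exact (hg.2 i hi).2 a hai
    · intro g hg g' hg' h
      have hg := mem_stab.1 (mem_coe.1 hg)
      have hg' := mem_stab.1 (mem_coe.1 hg')
      refine Prod.ext (Equiv.ext fun i => ?_) h
      rw [(hg.2 i (mem_univ _)).1, (hg'.2 i (mem_univ _)).1]
  refine h1.trans (le_of_eq ?_)
  rw [← Fintype.card_congr (Equiv.Perm.subtypeEquivSubtypePerm fun a => a ∉ U),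
    Fintype.card_perm]
  congr 1
  rw [Fintype.card_subtype_compl, Fintype.card_coe]

lemma factorial_pow_le {d l : ℕ} (h : d ≤ l) : d.factorial ^ l ≤ l.factorial ^ d := by
  calc d.factorial ^ l = d.factorial ^ d * d.factorial ^ (l - d) := by
        rw [← pow_add]; congr 1; omega
    _ ≤ d.factorial ^ d * (d ^ d) ^ (l - d) :=
        Nat.mul_le_mul_left _ (Nat.pow_le_pow_left d.factorial_le_pow _)
    _ = (d.factorial * d ^ (l - d)) ^ d := by
        rw [mul_pow, ← pow_mul, ← pow_mul, mul_comm d]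
    _ ≤ _ := Nat.pow_le_pow_left (Nat.factorial_mul_pow_sub_le_factorial h) _

lemma prod_card_fiber_le {β γ : Type*} [Fintype β] [DecidableEq γ] (comp : β → γ) :
    ∏ c ∈ univ.image comp, (univ.filter fun i => comp i = c).card ≤ 2 ^ Fintype.card β := by
  calc _ ≤ ∏ c ∈ univ.image comp, 2 ^ (univ.filter fun i => comp i = c).card :=
        prod_le_prod' fun c _ => Nat.lt_two_pow_self.le
    _ = 2 ^ Fintype.card β := by
        rw [prod_pow_eq_pow_sum, ← card_eq_sum_card_image, card_univ]

/-- Exposing the sets one at a time, always choosing a set adjacent to the exposed ones when there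
is one. If `v` is adjacent to an exposed set then its image is forced, otherwise it stays in the
component of `v`; and a set with `d` new points contributes `d!`, where `d! ^ l ≤ l! ^ d`. -/
lemma stab_bound (T : ι → Finset α) (l : ℕ) (hl : ∀ i, (T i).card = l)
    (htwo : ∀ x i j k, x ∈ T i → x ∈ T j → x ∈ T k → i = j ∨ j = k ∨ i = k)
    (comp : ι → κ)
    (hconn : ∀ S : Finset ι, ∀ s ∈ S, ∀ v ∉ S, comp s = comp v →
      ∃ s ∈ S, ∃ v ∉ S, (T s ∩ T v).Nonempty)
    (hcomp : ∀ g ∈ stab T ∅, ∀ v, comp (g.1 v) = comp v) (n : ℕ) :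
    ∀ S : Finset ι, Sᶜ.card = n → (stab T S).card ^ l ≤
      (∏ c ∈ univ.image comp \ S.image comp, (univ.filter fun i => comp i = c).card) ^ l *
        l.factorial ^ (univ.biUnion T \ S.biUnion T).card *
        (Fintype.card α - (univ.biUnion T).card).factorial ^ l := by
  induction n with
  | zero =>
    intro S hS
    have hS : S = univ := by simpa using hS
    subst hS
    simpa using Nat.pow_le_pow_left (card_stab_univ T) l
  | succ n ih =>
    intro S hS
    set W : Finset ι → ℕ := fun S => ∏ c ∈ univ.image comp \ S.image comp,
      (univ.filter fun i => comp i = c).card with hW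
    obtain ⟨v, hv, Q, hQ, hWQ⟩ : ∃ v ∉ S, ∃ Q : Finset ι, (∀ g ∈ stab T S, g.1 v ∈ Q) ∧
        Q.card * W (insert v S) ≤ W S := by
      by_cases hadj : ∃ s ∈ S, ∃ v ∉ S, (T s ∩ T v).Nonempty
      · obtain ⟨s, hs, v, hv, e, he⟩ := hadj
        obtain ⟨hes, hev⟩ := mem_inter.1 he
        refine ⟨v, hv, {v}, fun g hg => ?_, ?_⟩
        · have hg := mem_stab.1 hg
          have h1 : g.2 e ∈ T (g.1 v) := by
            rw [← hg.1 v]; exact mem_image_of_mem _ hev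
          rw [(hg.2 s hs).2 e hes] at h1
          rw [mem_singleton]
          have hsv : s ≠ v := fun h => hv (h ▸ hs)
          rcases htwo e s v (g.1 v) hes hev h1 with h | h | h
          · exact absurd h hsv
          · exact h.symm
          · have : g.1 s = g.1 v := by rw [(hg.2 s hs).1]; exact h
            exact absurd (g.1.injective this) hsv
        · rw [card_singleton, one_mul]
          refine prod_le_prod_of_subset_of_one_le' ?_ ?_
          · exact sdiff_subset_sdiff le_rfl (image_subset_image (subset_insert _ _))
          · intro c hc _
            obtain ⟨i, _, rfl⟩ := mem_image.1 (mem_sdiff.1 hc).1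
            exact card_pos.2 ⟨i, by simp⟩
      · have : Sᶜ.Nonempty := card_pos.1 (by omega)
        obtain ⟨v, hv⟩ := this
        have hv : v ∉ S := mem_compl.1 hv
        have hcv : comp v ∉ S.image comp := by
          intro h
          obtain ⟨s, hs, hsv⟩ := mem_image.1 h
          exact hadj (hconn S s hs v hv hsv)
        refine ⟨v, hv, univ.filter fun i => comp i = comp v, fun g hg => ?_, le_of_eq ?_⟩
        · refine mem_filter.2 ⟨mem_univ _, hcomp g ?_ v⟩
          exact mem_stab.2 ⟨(mem_stab.1 hg).1, by simp⟩
        · have : univ.image comp \ S.image comp =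
              insert (comp v) (univ.image comp \ (insert v S).image comp) := by
            ext c
            simp only [mem_sdiff, mem_insert, image_insert]
            by_cases hc : c = comp v
            · subst hc; simp [hcv]
            · simp [hc]
          simp only [hW]
          rw [this, prod_insert (by simp)]
    have hn : (insert v S)ᶜ.card = n := by
      have h1 := card_compl (insert v S)
      have h2 := card_compl S
      rw [card_insert_of_notMem hv] at h1
      omega
    have hrec := ih (insert v S) hn
    set D := T v \ S.biUnion T with hD
    have hstep := stab_step T S v Q hQ
    have hUcard : (univ.biUnion T \ S.biUnion T).card =
        D.card + (univ.biUnion T \ (insert v S).biUnion T).card := by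
      rw [← card_union_of_disjoint]
      · congr 1
        ext x
        simp only [hD, mem_union, mem_sdiff, biUnion_insert]
        have : x ∈ T v → x ∈ univ.biUnion T := fun h => mem_biUnion.2 ⟨v, mem_univ _, h⟩
        tauto
      · rw [Finset.disjoint_left]
        intro x hx hx'
        simp only [hD, mem_sdiff, biUnion_insert, mem_union] at hx hx'
        tauto
    have hDl : D.card.factorial ^ l ≤ l.factorial ^ D.card :=
      factorial_pow_le ((card_le_card sdiff_subset).trans (hl v).le)
    rw [hUcard, pow_add]
    set R := (Fintype.card α - (univ.biUnion T).card).factorial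
    calc (stab T S).card ^ l
        ≤ (Q.card * D.card.factorial * (stab T (insert v S)).card) ^ l :=
          Nat.pow_le_pow_left hstep l
      _ = Q.card ^ l * D.card.factorial ^ l * (stab T (insert v S)).card ^ l := by
          rw [mul_pow, mul_pow]
      _ ≤ Q.card ^ l * l.factorial ^ D.card * (W (insert v S) ^ l *
          l.factorial ^ (univ.biUnion T \ (insert v S).biUnion T).card * R ^ l) :=
          Nat.mul_le_mul (Nat.mul_le_mul_left _ hDl) hrec
      _ = (Q.card * W (insert v S)) ^ l * (l.factorial ^ D.card *
          l.factorial ^ (univ.biUnion T \ (insert v S).biUnion T).card) * R ^ l := by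
          rw [mul_pow]; ring
      _ ≤ _ := by gcongr

/-- The tuple obtained from `T` by permuting the points by `g.2` and the indices by `g.1`. -/
def act (T : ι → Finset α) (g : Equiv.Perm ι × Equiv.Perm α) : ι → Finset α :=
  fun i => (T (g.1⁻¹ i)).image g.2

/-- Lower bound for the number of tuples isomorphic to `T`: the orbit has size
`p! N! / #stab`, and `#stab ≤ 2^p (l!)^h (N - hl)!`. -/
lemma orbit_bound (T : ι → Finset α) (l h : ℕ) (hl : ∀ i, (T i).card = l) (hl0 : l ≠ 0)
    (hU : (univ.biUnion T).card = h * l)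
    (htwo : ∀ x i j k, x ∈ T i → x ∈ T j → x ∈ T k → i = j ∨ j = k ∨ i = k)
    (comp : ι → κ)
    (hconn : ∀ S : Finset ι, ∀ s ∈ S, ∀ v ∉ S, comp s = comp v →
      ∃ s ∈ S, ∃ v ∉ S, (T s ∩ T v).Nonempty)
    (hcomp : ∀ g ∈ stab T ∅, ∀ v, comp (g.1 v) = comp v) :
    (Fintype.card ι).factorial * (Fintype.card α).factorial ≤
      (2 ^ Fintype.card ι * l.factorial ^ h * (Fintype.card α - h * l).factorial) *
        (univ.image (act T)).card := by
  have h1 := stab_bound T l hl htwo comp hconn hcomp _ ∅ rfl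
  have h2 : (stab T ∅).card ≤
      2 ^ Fintype.card ι * l.factorial ^ h * (Fintype.card α - h * l).factorial := by
    rw [image_empty, biUnion_empty, sdiff_empty, sdiff_empty, hU, pow_mul, ← mul_pow,
      ← mul_pow] at h1
    refine ((Nat.pow_le_pow_iff_left hl0).1 h1).trans ?_
    have := prod_card_fiber_le comp
    gcongr
  have h3 := card_le_of_translate (univ : Finset (Equiv.Perm ι × Equiv.Perm α)) (stab T ∅)
    (act T) (by
      intro g _ g₀ _ hgg
      refine mem_stab.2 ⟨fun j => ?_, by simp⟩
      have := congrFun hgg (g.1 j)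
      unfold act at this
      have e0 : g.1⁻¹ (g.1 j) = j := g.1.symm_apply_apply _
      rw [e0] at this
      have h3 := congrArg (Finset.image (g₀.2⁻¹ : Equiv.Perm α)) this
      rw [Finset.image_image, Finset.image_image] at h3
      have e1 : ((g₀.2⁻¹ : Equiv.Perm α) : α → α) ∘ g₀.2 = id := by
        funext x; simp
      rw [e1, Finset.image_id] at h3
      exact h3)
  rw [card_univ, Fintype.card_prod, Fintype.card_perm, Fintype.card_perm] at h3
  exact h3.trans (Nat.mul_le_mul_right _ h2)

end Automorphisms

/-! ### From set-collections to tuples -/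

section Collections

open Finset

lemma mem_unionC {C : Multiset (Finset ℕ)} {a : ℕ} : a ∈ unionC C ↔ ∃ A ∈ C, a ∈ A := by
  unfold unionC
  induction C using Multiset.induction_on with
  | empty => simp
  | cons A C ih => simp [ih]

lemma exists_tuple (C : Multiset (Finset ℕ)) (p : ℕ) (hC : Multiset.card C = p) :
    ∃ A : Fin p → Finset ℕ, C = (univ : Finset (Fin p)).val.map A := by
  subst hC
  induction C using Quotient.inductionOn with
  | h L =>
    have h := Fin.univ_val_map L.get
    rw [List.ofFn_get] at h
    exact ⟨L.get, h.symm⟩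

variable {ι α : Type*} [Fintype ι] [DecidableEq ι] [Fintype α] [DecidableEq α]

/-- Two families of subsets of `ℕ`, embedded by `g` and `g'` in a common set `α` where a
permutation `θ` matches them along `τ`, have isomorphic collections. -/
lemma isomorphic_of_match {ι α : Type*} [Fintype ι] [DecidableEq α] (A A' : ι → Finset ℕ)
    (g g' : ℕ → α)
    (hg : Set.InjOn g (univ.biUnion A : Finset ℕ))
    (hg' : Set.InjOn g' (univ.biUnion A' : Finset ℕ))
    (τ : Equiv.Perm ι) (θ : Equiv.Perm α)
    (h : ∀ j, ((A j).image g).image θ = (A' (τ j)).image g') (I : Finset ι) :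
    Isomorphic (I.val.map A) ((I.map τ.toEmbedding).val.map A') := by
  set V : Set ℕ := ((univ.biUnion A' : Finset ℕ) : Set ℕ) with hV
  have hAU : ∀ j, ∀ x ∈ A j, x ∈ ((univ.biUnion A : Finset ℕ) : Set ℕ) := fun j x hx =>
    mem_coe.2 (mem_biUnion.2 ⟨j, mem_univ _, hx⟩)
  have hAV : ∀ j, ∀ x ∈ A' j, x ∈ V := fun j x hx =>
    mem_coe.2 (mem_biUnion.2 ⟨j, mem_univ _, hx⟩)
  set φ : ℕ → ℕ := fun x => Function.invFunOn g' V (θ (g x)) with hφ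
  have key : ∀ j, ∀ x ∈ A j, φ x ∈ A' (τ j) ∧ g' (φ x) = θ (g x) := by
    intro j x hx
    have h1 : θ (g x) ∈ (A' (τ j)).image g' := by
      rw [← h j]
      exact mem_image_of_mem _ (mem_image_of_mem _ hx)
    obtain ⟨y, hy, hyx⟩ := mem_image.1 h1
    have hex : ∃ a ∈ V, g' a = θ (g x) := ⟨y, hAV _ _ hy, hyx⟩
    have h2 : g' (φ x) = θ (g x) := Function.invFunOn_eq hex
    have h3 : φ x ∈ V := Function.invFunOn_mem hex
    have h4 : φ x = y := hg' h3 (hAV _ _ hy) (h2.trans hyx.symm)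
    exact ⟨h4 ▸ hy, h2⟩
  have himg : ∀ j, (A j).image φ = A' (τ j) := by
    intro j
    ext y
    rw [mem_image]
    constructor
    · rintro ⟨x, hx, rfl⟩; exact (key j x hx).1
    · intro hy
      have h1 : g' y ∈ ((A j).image g).image θ := by
        rw [h j]; exact mem_image_of_mem _ hy
      obtain ⟨z, hz, hzy⟩ := mem_image.1 h1
      obtain ⟨x, hx, rfl⟩ := mem_image.1 hz
      refine ⟨x, hx, ?_⟩
      obtain ⟨k1, k2⟩ := key j x hx
      exact hg' (hAV _ _ k1) (hAV _ _ hy) (k2.trans hzy)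
  have hmap : (I.val.map A).map (Finset.image φ) = (I.map τ.toEmbedding).val.map A' := by
    rw [Finset.map_val, Multiset.map_map, Multiset.map_map]
    refine Multiset.map_congr rfl fun j _ => ?_
    exact himg j
  refine ⟨φ, ⟨?_, ?_, ?_⟩, hmap⟩
  · intro x hx
    obtain ⟨B, hB, hxB⟩ := mem_unionC.1 (mem_coe.1 hx)
    refine mem_coe.2 (mem_unionC.2 ⟨B.image φ, ?_, mem_image_of_mem _ hxB⟩)
    rw [← hmap]; exact Multiset.mem_map_of_mem _ hB
  · intro x hx y hy hxy
    obtain ⟨B, hB, hxB⟩ := mem_unionC.1 (mem_coe.1 hx)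
    obtain ⟨B', hB', hyB⟩ := mem_unionC.1 (mem_coe.1 hy)
    obtain ⟨i, _, rfl⟩ := Multiset.mem_map.1 hB
    obtain ⟨j, _, rfl⟩ := Multiset.mem_map.1 hB'
    refine hg (hAU _ _ hxB) (hAU _ _ hyB) (θ.injective ?_)
    rw [← (key i x hxB).2, ← (key j y hyB).2, hxy]
  · intro y hy
    obtain ⟨B, hB, hyB⟩ := mem_unionC.1 (mem_coe.1 hy)
    rw [← hmap] at hB
    obtain ⟨B', hB', rfl⟩ := Multiset.mem_map.1 hB
    obtain ⟨x, hx, rfl⟩ := mem_image.1 hyB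
    exact ⟨x, mem_coe.2 (mem_unionC.2 ⟨B', hB', hx⟩), rfl⟩

/-- The intersection graph of the family `A`, on the indices: equal nonempty sets with different
indices are adjacent, as happens for a set occurring twice in a double-covering. -/
def interGraph (A : ι → Finset ℕ) : SimpleGraph ι where
  Adj i j := i ≠ j ∧ (A i ∩ A j).Nonempty
  symm := ⟨fun _ _ h => ⟨h.1.symm, by rw [inter_comm]; exact h.2⟩⟩
  loopless := ⟨fun _ h => h.1 rfl⟩

open Classical in
/-- The indices in the component of `v` in the intersection graph. -/
noncomputable def compSet (A : ι → Finset ℕ) (v : ι) : Finset ι :=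
  univ.filter fun i => (interGraph A).Reachable v i

lemma mem_compSet {A : ι → Finset ℕ} {v i : ι} :
    i ∈ compSet A v ↔ (interGraph A).Reachable v i := by
  simp [compSet]

lemma isComponent_compSet (A : ι → Finset ℕ) (v : ι) :
    IsComponent ((univ : Finset ι).val.map A) ((compSet A v).val.map A) := by
  have hsub : (compSet A v).val ≤ (univ : Finset ι).val := val_le_iff.2 (subset_univ _)
  refine ⟨Multiset.map_le_map hsub, ?_, ?_, ?_⟩
  · have : A v ∈ (compSet A v).val.map A :=
      Multiset.mem_map_of_mem _ (mem_compSet.2 (SimpleGraph.Reachable.refl v))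
    intro h
    rw [h] at this
    simp at this
  · intro X hX Y hY
    obtain ⟨i, hi, rfl⟩ := Multiset.mem_map.1 hX
    obtain ⟨j, hj, rfl⟩ := Multiset.mem_map.1 hY
    have hi := mem_compSet.1 hi
    have hij : (interGraph A).Reachable i j := hi.symm.trans (mem_compSet.1 hj)
    have hch := (SimpleGraph.reachable_iff_reflTransGen i j).1 hij
    clear hj hY hij
    induction hch with
    | refl => exact Relation.ReflTransGen.refl
    | tail h1 h2 ih =>
      have hb := hi.trans ((SimpleGraph.reachable_iff_reflTransGen _ _).2 h1)
      refine (ih).tail ⟨?_, ?_, h2.2⟩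
      · exact Multiset.mem_map_of_mem _ (mem_compSet.2 hb)
      · exact Multiset.mem_map_of_mem _ (mem_compSet.2 (hb.trans h2.reachable))
  · intro B hB X hX
    have hdec : (univ : Finset ι).val = ((compSet A v)ᶜ).val + (compSet A v).val := by
      rw [← Finset.disjUnion_val _ _ disjoint_compl_left]
      congr 1
      rw [disjUnion_eq_union, union_comm, union_compl]
    rw [hdec, Multiset.map_add, Multiset.add_sub_cancel_right] at hB
    obtain ⟨i, hi, rfl⟩ := Multiset.mem_map.1 hB
    obtain ⟨j, hj, rfl⟩ := Multiset.mem_map.1 hX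
    have hi : i ∉ compSet A v := mem_compl.1 hi
    have hj := mem_compSet.1 hj
    by_contra hne
    apply hi
    have hij : j ≠ i := fun h => hi (h ▸ mem_compSet.2 hj)
    have hadj : (interGraph A).Adj j i :=
      ⟨hij, by rw [inter_comm]; exact nonempty_iff_ne_empty.2 hne⟩
    exact mem_compSet.2 (hj.trans hadj.reachable)

/-- An automorphism of a standard family maps each component to an isomorphic one, hence to
itself. -/
lemma standard_reachable (A : ι → Finset ℕ) (hA0 : ∀ i, (A i).Nonempty)
    (hst : IsStandard ((univ : Finset ι).val.map A)) (g : ℕ → α)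
    (hg : Set.InjOn g (univ.biUnion A : Finset ℕ)) (γ : Equiv.Perm ι × Equiv.Perm α)
    (hγ : γ ∈ stab (fun i => (A i).image g) ∅) (v : ι) :
    (interGraph A).Reachable v (γ.1 v) := by
  have hγ := (mem_stab.1 hγ).1
  have hiso := isomorphic_of_match A A g g hg hg γ.1 γ.2 hγ (compSet A v)
  -- Images of intersecting sets under the injective map `γ.2 ∘ g` intersect.
  have hadj : ∀ i j, (interGraph A).Adj i j → (interGraph A).Adj (γ.1 i) (γ.1 j) := by
    rintro i j ⟨hij, x, hx⟩
    refine ⟨fun h => hij (γ.1.injective h), ?_⟩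
    obtain ⟨hxi, hxj⟩ := mem_inter.1 hx
    have h1 : γ.2 (g x) ∈ (A (γ.1 i)).image g := by
      rw [← hγ i]; exact mem_image_of_mem _ (mem_image_of_mem _ hxi)
    have h2 : γ.2 (g x) ∈ (A (γ.1 j)).image g := by
      rw [← hγ j]; exact mem_image_of_mem _ (mem_image_of_mem _ hxj)
    obtain ⟨y, hy, hyx⟩ := mem_image.1 h1
    obtain ⟨z, hz, hzx⟩ := mem_image.1 h2
    have : y = z := hg (mem_coe.2 (mem_biUnion.2 ⟨_, mem_univ _, hy⟩))
      (mem_coe.2 (mem_biUnion.2 ⟨_, mem_univ _, hz⟩)) (hyx.trans hzx.symm)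
    exact ⟨y, mem_inter.2 ⟨hy, this ▸ hz⟩⟩
  have hadj' : ∀ i j, (interGraph A).Adj (γ.1 i) (γ.1 j) → (interGraph A).Adj i j := by
    rintro i j ⟨hij, x, hx⟩
    refine ⟨fun h => hij (h ▸ rfl), ?_⟩
    obtain ⟨hxi, hxj⟩ := mem_inter.1 hx
    have h1 : g x ∈ ((A i).image g).image γ.2 := by
      rw [hγ i]; exact mem_image_of_mem _ hxi
    have h2 : g x ∈ ((A j).image g).image γ.2 := by
      rw [hγ j]; exact mem_image_of_mem _ hxj
    obtain ⟨_, hy', hyx⟩ := mem_image.1 h1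
    obtain ⟨_, hz', hzx⟩ := mem_image.1 h2
    obtain ⟨y, hy, rfl⟩ := mem_image.1 hy'
    obtain ⟨z, hz, rfl⟩ := mem_image.1 hz'
    have : y = z := hg (mem_coe.2 (mem_biUnion.2 ⟨_, mem_univ _, hy⟩))
      (mem_coe.2 (mem_biUnion.2 ⟨_, mem_univ _, hz⟩)) (γ.2.injective (hyx.trans hzx.symm))
    exact ⟨y, mem_inter.2 ⟨hy, this ▸ hz⟩⟩
  let e : interGraph A ≃g interGraph A := ⟨γ.1, ⟨hadj' _ _, hadj _ _⟩⟩
  have hmap : (compSet A v).map γ.1.toEmbedding = compSet A (γ.1 v) := by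
    ext i
    rw [mem_map_equiv, mem_compSet, mem_compSet]
    have := e.reachable_iff (u := v) (v := γ.1.symm i)
    have e1 : e (γ.1.symm i) = i := γ.1.apply_symm_apply i
    rw [e1] at this
    exact this.symm
  rw [hmap] at hiso
  have heq : (compSet A v).val.map A = (compSet A (γ.1 v)).val.map A := by
    by_contra hne
    exact hst _ _ (isComponent_compSet A v) (isComponent_compSet A (γ.1 v)) hne hiso
  have hv : A v ∈ (compSet A (γ.1 v)).val.map A := by
    rw [← heq]
    exact Multiset.mem_map_of_mem _ (mem_compSet.2 (SimpleGraph.Reachable.refl v))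
  obtain ⟨j, hj, hjv⟩ := Multiset.mem_map.1 hv
  have hj := mem_compSet.1 hj
  by_cases hjv' : j = v
  · exact hjv' ▸ hj.symm
  · have : (interGraph A).Adj j v := ⟨hjv', by rw [hjv, inter_self]; exact hA0 v⟩
    exact (hj.trans this.reachable).symm

/-- A set of indices containing part of a component but not all of it has an edge leaving it. -/
lemma exists_edge_out {β : Type*} (A : β → Finset ℕ) (S : Finset β) (s : β) (hs : s ∈ S)
    (v : β) (hv : v ∉ S) (h : (interGraph A).Reachable s v) : ∃ s ∈ S, ∃ v ∉ S, (A s ∩ A v).Nonempty := by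
  have hch := (SimpleGraph.reachable_iff_reflTransGen s v).1 h
  clear h
  induction hch with
  | refl => exact absurd hs hv
  | @tail b c h1 h2 ih =>
    by_cases hb : b ∈ S
    · exact ⟨b, hb, c, hv, h2.2⟩
    · exact ih hb

lemma exists_injOn (U : Finset ℕ) (N : ℕ) (hN : 0 < N) (hU : U.card ≤ N) :
    ∃ g : ℕ → Fin N, Set.InjOn g U := by
  classical
  refine ⟨fun x => if hx : x ∈ U then Fin.castLE hU (U.equivFin ⟨x, hx⟩) else ⟨0, hN⟩, ?_⟩
  intro x hx y hy hxy
  have hx : x ∈ U := hx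
  have hy : y ∈ U := hy
  simp only [hx, hy, dif_pos] at hxy
  simpa using hxy

lemma double_count {β : Type*} [Fintype β] (A : β → Finset ℕ) (l : ℕ) (hl : ∀ i, (A i).card = l)
    (h2 : ∀ x ∈ univ.biUnion A, (univ.filter fun i => x ∈ A i).card = 2) :
    Fintype.card β * l = 2 * (univ.biUnion A).card := by
  have h := Finset.sum_card_bipartiteAbove_eq_sum_card_bipartiteBelow
    (s := (univ : Finset β)) (t := univ.biUnion A) (fun i x => x ∈ A i)
  have e1 : ∀ i ∈ (univ : Finset β), (bipartiteAbove (fun i x => x ∈ A i) (univ.biUnion A) i).card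
      = l := by
    intro i _
    rw [← hl i]
    congr 1
    ext x
    simp only [bipartiteAbove, mem_filter, mem_biUnion, mem_univ, true_and]
    exact ⟨fun h => h.2, fun h => ⟨⟨i, h⟩, h⟩⟩
  have e2 : ∀ x ∈ univ.biUnion A,
      (bipartiteBelow (fun i x => x ∈ A i) (univ : Finset β) x).card = 2 := h2
  rw [sum_congr rfl e1, sum_congr rfl e2] at h
  simp only [sum_const, smul_eq_mul, card_univ] at h
  omega

/-- The `l`-uniform tuples of subsets of `α` in which every point has even multiplicity. -/
def evenTuples (ι α : Type*) [Fintype ι] [DecidableEq ι] [Fintype α] [DecidableEq α] (l : ℕ) :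
    Finset (ι → Finset α) :=
  univ.filter fun t => (∀ i, (t i).card = l) ∧ ∀ x, Even (univ.filter fun i => x ∈ t i).card

lemma mem_evenTuples {l : ℕ} {t : ι → Finset α} : t ∈ evenTuples ι α l ↔
    (∀ i, (t i).card = l) ∧ ∀ x, Even (univ.filter fun i => x ∈ t i).card := by
  simp [evenTuples]

lemma act_mem_evenTuples {T : ι → Finset α} {l : ℕ} (hT : T ∈ evenTuples ι α l)
    (g : Equiv.Perm ι × Equiv.Perm α) : act T g ∈ evenTuples ι α l := by
  obtain ⟨h1, h2⟩ := mem_evenTuples.1 hT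
  refine mem_evenTuples.2 ⟨fun i => ?_, fun x => ?_⟩
  · unfold act
    rw [card_image_of_injective _ g.2.injective, h1]
  · have : (univ.filter fun i => x ∈ act T g i) =
        (univ.filter fun i => g.2.symm x ∈ T i).map g.1.toEmbedding := by
      ext i
      simp only [mem_filter, mem_univ, true_and, mem_map_equiv, act, mem_image]
      constructor
      · rintro ⟨y, hy, rfl⟩
        simpa using hy
      · intro h
        exact ⟨_, h, by simp⟩
    rw [this, card_map]
    exact h2 _

/-- A standard double-covering with sets of size `l`, realised as a tuple of subsets of `Fin N`,
has an orbit of the expected size. -/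
lemma exists_realisation (l h N : ℕ) (hl : 2 ≤ l) (hN : 0 < N) (hN' : h * l ≤ N)
    (C : Multiset (Finset ℕ)) (hcard : Multiset.card C = 2 * h) (hdc : IsDoubleCover C)
    (hst : IsStandard C) (hCl : ∀ A ∈ C, A.card = l) :
    ∃ (A : Fin (2 * h) → Finset ℕ) (g : ℕ → Fin N),
      C = (univ : Finset (Fin (2 * h))).val.map A ∧
      Set.InjOn g (univ.biUnion A : Finset ℕ) ∧
      (fun i => (A i).image g) ∈ evenTuples (Fin (2 * h)) (Fin N) l ∧
      (2 * h).factorial * N.factorial ≤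
        (2 ^ (2 * h) * l.factorial ^ h * (N - h * l).factorial) *
          (univ.image (act fun i => (A i).image g)).card := by
  obtain ⟨A, rfl⟩ := exists_tuple C _ hcard
  have hAl : ∀ i, (A i).card = l := fun i => hCl _ (Multiset.mem_map_of_mem _ (mem_univ i))
  have hA2 : ∀ x ∈ univ.biUnion A, (univ.filter fun i => x ∈ A i).card = 2 := by
    intro x hx
    obtain ⟨i, _, hxi⟩ := mem_biUnion.1 hx
    have := hdc x (mem_unionC.2 ⟨A i, Multiset.mem_map_of_mem _ (mem_univ i), hxi⟩)
    rw [Multiset.countP_map] at this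
    exact this
  have hUc : (univ.biUnion A).card = h * l := by
    have := double_count A l hAl hA2
    rw [Fintype.card_fin, mul_assoc] at this
    omega
  obtain ⟨g, hg⟩ := exists_injOn (univ.biUnion A) N hN (by omega)
  have hAU : ∀ i, A i ⊆ univ.biUnion A := fun i => subset_biUnion_of_mem A (mem_univ i)
  set T : Fin (2 * h) → Finset (Fin N) := fun i => (A i).image g with hT
  have hmemT : ∀ x ∈ univ.biUnion A, ∀ i, g x ∈ T i ↔ x ∈ A i := by
    intro x hx i
    constructor
    · intro h
      obtain ⟨y, hy, hyx⟩ := mem_image.1 h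
      have : y = x := hg (hAU i hy) hx hyx
      exact this ▸ hy
    · exact fun h => mem_image_of_mem _ h
  have hTl : ∀ i, (T i).card = l := fun i => by
    rw [hT, ← hAl i]
    exact card_image_of_injOn (hg.mono (hAU i))
  have hT2 : ∀ x i, x ∈ T i → (univ.filter fun j => x ∈ T j).card = 2 := by
    intro x i hx
    obtain ⟨y, hy, rfl⟩ := mem_image.1 hx
    have e : (univ.filter fun j => g y ∈ T j) = univ.filter fun j => y ∈ A j :=
      filter_congr fun j _ => hmemT y (hAU i hy) j
    rw [e]
    exact hA2 y (hAU i hy)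
  have hbU : univ.biUnion T = (univ.biUnion A).image g := by
    ext x
    simp only [hT, mem_biUnion, mem_image, mem_univ, true_and]
    constructor
    · rintro ⟨i, y, hy, rfl⟩; exact ⟨y, ⟨i, hy⟩, rfl⟩
    · rintro ⟨y, ⟨i, hy⟩, rfl⟩; exact ⟨i, y, hy, rfl⟩
  have htwo : ∀ x i j k, x ∈ T i → x ∈ T j → x ∈ T k → i = j ∨ j = k ∨ i = k := by
    intro x i j k hi hj hk
    by_contra! hne
    have h3 : ({i, j, k} : Finset (Fin (2 * h))).card = 3 :=
      card_eq_three.2 ⟨i, j, k, hne.1, hne.2.2, hne.2.1, rfl⟩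
    have h4 : ({i, j, k} : Finset (Fin (2 * h))) ⊆ univ.filter fun j => x ∈ T j := by
      intro a ha
      simp only [mem_insert, mem_singleton] at ha
      rcases ha with rfl | rfl | rfl <;> exact mem_filter.2 ⟨mem_univ _, by assumption⟩
    have := card_le_card h4
    rw [h3, hT2 x i hi] at this
    omega
  refine ⟨A, g, rfl, hg, ?_, ?_⟩
  · refine mem_evenTuples.2 ⟨hTl, fun x => ?_⟩
    by_cases hx : ∃ i, x ∈ T i
    · obtain ⟨i, hi⟩ := hx
      change Even (univ.filter fun j => x ∈ T j).card
      rw [hT2 x i hi]; exact even_two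
    · push Not at hx
      have : (univ.filter fun i => x ∈ T i) = ∅ := filter_eq_empty_iff.2 fun i _ => hx i
      change Even (univ.filter fun j => x ∈ T j).card
      rw [this]; simp
  · classical
    have := orbit_bound T l h hTl (by omega)
      (by rw [hbU, card_image_of_injOn hg, hUc]) htwo
      (fun i => (interGraph A).connectedComponentMk i) ?_ ?_
    · simpa only [Fintype.card_fin] using this
    · intro S s hs v hv hsv
      obtain ⟨a, ha, b, hb, x, hx⟩ :=
        exists_edge_out A S s hs v hv (SimpleGraph.ConnectedComponent.exact hsv)
      obtain ⟨hxa, hxb⟩ := mem_inter.1 hx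
      exact ⟨a, ha, b, hb, g x, mem_inter.2 ⟨mem_image_of_mem _ hxa, mem_image_of_mem _ hxb⟩⟩
    · intro γ hγ v
      refine SimpleGraph.ConnectedComponent.sound
        (standard_reachable A (fun i => card_pos.1 (by rw [hAl]; omega)) hst g hg γ hγ v).symm

/-- Counting tuples: distinct isomorphism classes of standard double-coverings give disjoint
orbits, each of the size provided by `orbit_bound`. -/
lemma count_evenTuples (l h N : ℕ) (hl : 2 ≤ l) (hN : 0 < N) (hN' : h * l ≤ N) :
    muStandard l (2 * h) * ((2 * h).factorial * N.factorial) ≤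
      (2 ^ (2 * h) * l.factorial ^ h * (N - h * l).factorial) *
        (evenTuples (Fin (2 * h)) (Fin N) l).card := by
  classical
  unfold muStandard
  set Q := Quot (fun C D : {C : Multiset (Finset ℕ) //
      Multiset.card C = 2 * h ∧ IsDoubleCover C ∧ IsStandard C ∧ ∀ A ∈ C, A.card = l} =>
    Isomorphic C.1 D.1) with hQ
  rcases Nat.eq_zero_or_pos (Nat.card Q) with h0 | hpos
  · rw [h0]; simp
  have : Finite Q := (Nat.card_pos_iff.1 hpos).2
  have : Fintype Q := Fintype.ofFinite Q
  choose A g hC hg hT hbound using fun q : Q => exists_realisation l h N hl hN hN' q.out.1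
    q.out.2.1 q.out.2.2.1 q.out.2.2.2.1 q.out.2.2.2.2
  set O : Q → Finset (Fin (2 * h) → Finset (Fin N)) :=
    fun q => univ.image (act fun i => (A q i).image (g q)) with hO
  have hdisj : ∀ q q', q ≠ q' → Disjoint (O q) (O q') := by
    intro q q' hqq
    rw [Finset.disjoint_left]
    intro t ht ht'
    obtain ⟨a, _, ha⟩ := mem_image.1 ht
    obtain ⟨b, _, hb⟩ := mem_image.1 ht'
    apply hqq
    have hiso : Isomorphic q.out.1 q'.out.1 := by
      have := isomorphic_of_match (A q) (A q') (g q) (g q') (hg q) (hg q') (b.1⁻¹ * a.1)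
        (b.2⁻¹ * a.2) ?_ univ
      · rw [map_univ_equiv] at this
        rw [hC q, hC q']
        exact this
      · intro j
        have h1 := congrFun (ha.trans hb.symm) (a.1 j)
        unfold act at h1
        have e0 : a.1⁻¹ (a.1 j) = j := a.1.symm_apply_apply _
        rw [e0] at h1
        have h3 := congrArg (Finset.image (b.2⁻¹ : Equiv.Perm (Fin N))) h1
        rw [image_image, image_image (s := (A q' _).image (g q'))] at h3
        have e1 : ((b.2⁻¹ : Equiv.Perm (Fin N)) : Fin N → Fin N) ∘ b.2 = id := by
          funext x; simp
        rw [e1, image_id] at h3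
        exact h3
    rw [← q.out_eq, ← q'.out_eq]
    exact Quot.sound hiso
  have hsub : univ.biUnion O ⊆ evenTuples (Fin (2 * h)) (Fin N) l := by
    intro t ht
    obtain ⟨q, _, hq⟩ := mem_biUnion.1 ht
    obtain ⟨a, _, rfl⟩ := mem_image.1 hq
    exact act_mem_evenTuples (hT q) a
  have hcard := card_le_card hsub
  rw [card_biUnion fun q _ q' _ hqq => hdisj q q' hqq] at hcard
  calc Nat.card Q * ((2 * h).factorial * N.factorial)
      = ∑ _q : Q, (2 * h).factorial * N.factorial := by
        rw [sum_const, card_univ, Nat.card_eq_fintype_card, smul_eq_mul]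
    _ ≤ ∑ q : Q, (2 ^ (2 * h) * l.factorial ^ h * (N - h * l).factorial) * (O q).card :=
        sum_le_sum fun q _ => hbound q
    _ ≤ _ := by
        rw [← mul_sum]
        exact Nat.mul_le_mul_left _ hcard

end Collections

/-! ### The lower bound -/

/-- The point `i` of `Fin N`, viewed as the positive integer `i + 1`. -/
def finSuccEmb (N : ℕ) : Fin N ↪ ℕ := ⟨fun i => i.1 + 1, fun i j h => Fin.ext (by simpa using h)⟩

lemma prod_evenTuple {p N l : ℕ} {t : Fin p → Finset (Fin N)}
    (ht : t ∈ evenTuples (Fin p) (Fin N) l) {s : ℕ → ℝ} (hs : ∀ k, s k * s k = 1) :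
    ∏ i, signProd s ((t i).map (finSuccEmb N)) = 1 := by
  have h2 := (mem_evenTuples.1 ht).2
  have h1 : ∀ i, signProd s ((t i).map (finSuccEmb N)) =
      ∏ x : Fin N, if x ∈ t i then s (finSuccEmb N x) else 1 := by
    intro i
    rw [signProd, Finset.prod_map, Finset.prod_ite_mem, Finset.univ_inter]
  rw [Finset.prod_congr rfl fun i _ => h1 i, Finset.prod_comm]
  refine Finset.prod_eq_one fun x _ => ?_
  rw [Finset.prod_ite, Finset.prod_const_one, mul_one, Finset.prod_const]
  obtain ⟨m, hm⟩ := h2 x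
  rw [hm, pow_add, ← mul_pow, hs, one_pow]

/-- Expanding the `p`-th power, every tuple contributes a non-negative amount and every even
tuple contributes `2 ^ N`. -/
lemma cube_lower (l p N : ℕ) :
    ((evenTuples (Fin p) (Fin N) l).card : ℝ) * 2 ^ N ≤
      ∑ X ∈ (Finset.Icc 1 N).powerset,
        (∑ A ∈ (Finset.Icc 1 N).powersetCard l, signProd (cubeSign X) A) ^ p := by
  set T := Finset.Icc 1 N with hT
  simp_rw [Finset.sum_pow']
  rw [Finset.sum_comm]
  set F : (Fin p → Finset ℕ) → ℝ := fun t => ∑ X ∈ T.powerset, ∏ i, signProd (cubeSign X) (t i)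
    with hF
  set em : (Fin p → Finset (Fin N)) → (Fin p → Finset ℕ) :=
    fun t i => (t i).map (finSuccEmb N) with hem
  have hinj : Function.Injective em := by
    intro t t' h
    funext i
    exact Finset.map_injective (finSuccEmb N) (congrFun h i)
  have hsub : (evenTuples (Fin p) (Fin N) l).image em ⊆
      Fintype.piFinset (fun _ : Fin p => T.powersetCard l) := by
    intro u hu
    obtain ⟨t, ht, rfl⟩ := Finset.mem_image.1 hu
    refine Fintype.mem_piFinset.2 fun i => Finset.mem_powersetCard.2 ⟨?_, ?_⟩
    · intro k hk
      obtain ⟨x, _, rfl⟩ := Finset.mem_map.1 hk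
      exact Finset.mem_Icc.2 ⟨Nat.le_add_left 1 x.1, x.2⟩
    · rw [hem, Finset.card_map]
      exact (mem_evenTuples.1 ht).1 i
  calc ((evenTuples (Fin p) (Fin N) l).card : ℝ) * 2 ^ N
      = ∑ t ∈ evenTuples (Fin p) (Fin N) l, F (em t) := by
        rw [← nsmul_eq_mul, ← Finset.sum_const]
        refine Finset.sum_congr rfl fun t ht => ?_
        rw [hF, hem]
        simp only [prod_evenTuple ht (cubeSign_mul_self _)]
        simp [hT]
    _ = ∑ u ∈ (evenTuples (Fin p) (Fin N) l).image em, F u :=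
        (Finset.sum_image fun _ _ _ _ h => hinj h).symm
    _ ≤ ∑ u ∈ Fintype.piFinset (fun _ : Fin p => T.powersetCard l), F u := by
        refine Finset.sum_le_sum_of_subset_of_nonneg hsub fun u hu _ => ?_
        obtain ⟨J, hJ, h⟩ := exists_prod_signProd T Finset.univ u
          fun i _ => (Finset.mem_powersetCard.1 (Fintype.mem_piFinset.1 hu i)).1
        rw [hF]
        simp only [h _ (cubeSign_mul_self _)]
        rw [sum_cube_signProd hJ]
        split_ifs <;> positivity

/-- For `N = 2n²`, Bernoulli's inequality gives `Nⁿ ≤ 2 N(N-1)⋯(N-n+1)`. -/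
lemma pow_le_two_mul_descFactorial (n : ℕ) (hn : 1 ≤ n) :
    (2 * n * n) ^ n ≤ 2 * (2 * n * n).descFactorial n := by
  have h1 := Nat.pow_sub_le_descFactorial (2 * n * n) n
  have h2 : (2 * n * n) ^ n ≤ 2 * (2 * n * n + 1 - n) ^ n := by
    have hnn : n ≤ 2 * n * n := by nlinarith
    have hn0 : (0 : ℝ) < n := by exact_mod_cast hn
    have hb := one_add_mul_le_pow (a := -(1 / (2 * n : ℝ))) (by
      have : 1 / (2 * n : ℝ) ≤ 1 := by
        rw [div_le_one (by positivity)]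
        have : (1 : ℝ) ≤ n := by exact_mod_cast hn
        linarith
      linarith) n
    have e : 1 + (n : ℝ) * -(1 / (2 * n : ℝ)) = 1 / 2 := by field_simp; norm_num
    rw [e] at hb
    have h3 : ((2 * n * n : ℕ) : ℝ) ^ n ≤ 2 * (((2 * n * n - n : ℕ) : ℝ)) ^ n := by
      have e2 : ((2 * n * n - n : ℕ) : ℝ) = ((2 * n * n : ℕ) : ℝ) * (1 + -(1 / (2 * n : ℝ))) := by
        rw [Nat.cast_sub hnn]; push_cast; field_simp
        ring
      rw [e2, mul_pow]
      have : (0 : ℝ) ≤ ((2 * n * n : ℕ) : ℝ) ^ n := by positivity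
      nlinarith
    have h4 : (2 * n * n) ^ n ≤ 2 * (2 * n * n - n) ^ n := by exact_mod_cast h3
    refine h4.trans (Nat.mul_le_mul_left _ (Nat.pow_le_pow_left (by omega) _))
  exact h2.trans (Nat.mul_le_mul_left _ h1)

/-- The counting estimate behind the lower bound: for `N = 2 (hl)²` the even `l`-uniform tuples
number at least `p! μ / 12^h` times `(N choose l)^h`, where `p = 2h`. -/
lemma count_choose (l h N : ℕ) (hl : 2 ≤ l) (hh : 1 ≤ h)
    (hN : N = 2 * (h * l) * (h * l)) :
    (2 * h).factorial * muStandard l (2 * h) * N.choose l ^ h ≤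
      12 ^ h * (evenTuples (Fin (2 * h)) (Fin N) l).card := by
  set n := h * l with hn
  have hn1 : 1 ≤ n := Nat.mul_pos hh (by omega)
  have hnN : n ≤ N := by rw [hN]; nlinarith
  have h1 := count_evenTuples l h N hl (by omega) hnN
  set M := (evenTuples (Fin (2 * h)) (Fin N) l).card
  set μ := muStandard l (2 * h)
  have hR : 0 < (N - n).factorial := Nat.factorial_pos _
  rw [← Nat.factorial_mul_descFactorial hnN] at h1
  have h2 : μ * ((2 * h).factorial * N.descFactorial n) ≤ 2 ^ (2 * h) * l.factorial ^ h * M := by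
    refine Nat.le_of_mul_le_mul_left ?_ hR
    calc _ = μ * ((2 * h).factorial * ((N - n).factorial * N.descFactorial n)) := by ring
      _ ≤ _ := h1
      _ = _ := by ring
  have h3 : N ^ n ≤ 2 * N.descFactorial n := by
    rw [hN]; exact pow_le_two_mul_descFactorial n hn1
  have h4 : N.choose l ^ h * l.factorial ^ h ≤ N ^ n := by
    rw [← mul_pow, hn, mul_comm h l, pow_mul]
    refine Nat.pow_le_pow_left ?_ h
    rw [mul_comm, ← Nat.descFactorial_eq_factorial_mul_choose]
    exact Nat.descFactorial_le_pow N l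
  have h5 : 2 * 2 ^ (2 * h) ≤ 12 ^ h := by
    have : (12 : ℕ) ^ h = 3 ^ h * 2 ^ (2 * h) := by rw [pow_mul, ← mul_pow]; norm_num
    rw [this]
    refine Nat.mul_le_mul_right _ ?_
    calc 2 ≤ 3 ^ 1 := by norm_num
      _ ≤ 3 ^ h := Nat.pow_le_pow_right (by norm_num) hh
  have hf : 0 < l.factorial ^ h := by positivity
  refine Nat.le_of_mul_le_mul_right ?_ hf
  calc (2 * h).factorial * μ * N.choose l ^ h * l.factorial ^ h
      = (2 * h).factorial * μ * (N.choose l ^ h * l.factorial ^ h) := by ring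
    _ ≤ (2 * h).factorial * μ * (2 * N.descFactorial n) :=
        Nat.mul_le_mul_left _ (h4.trans h3)
    _ = 2 * (μ * ((2 * h).factorial * N.descFactorial n)) := by ring
    _ ≤ 2 * (2 ^ (2 * h) * l.factorial ^ h * M) := Nat.mul_le_mul_left _ h2
    _ = 2 * 2 ^ (2 * h) * (l.factorial ^ h * M) := by ring
    _ ≤ 12 ^ h * (l.factorial ^ h * M) := Nat.mul_le_mul_right _ h5
    _ = _ := by ring

/-- for `l ≥ 2` and even `p ≥ 2`, the supremum over finite
sequences `b` with `‖b‖ ≤ 1` of `‖Σ_A b_A w_A‖_p` is at least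
`(p! μ_{l,p}(standard))^{1/p} / (2√3)`. -/
theorem stmt17 (l p : ℕ) (hl : 2 ≤ l) (hp : 2 ≤ p) (hpe : Even p) :
    ((Nat.factorial p * muStandard l p : ℕ) : ℝ) ^ ((1 : ℝ) / p) /
        (2 * Real.sqrt 3) ≤
      sSup {y : ℝ | ∃ (S : Finset (Finset ℕ)) (b : Finset ℕ → ℝ),
        (∀ A ∈ S, A.card = l ∧ ∀ n ∈ A, 1 ≤ n) ∧
        (∑ A ∈ S, (b A) ^ 2) ≤ 1 ∧
        y = (∫ x in (0:ℝ)..1, |∑ A ∈ S, b A * walsh A x| ^ p) ^ ((1 : ℝ) / p)} := by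
  obtain ⟨h, rfl⟩ := even_iff_two_dvd.1 hpe
  have hh : 1 ≤ h := by omega
  set N := 2 * (h * l) * (h * l) with hN
  set S := (Finset.Icc 1 N).powersetCard l with hS
  have hlN : l ≤ N := by
    have h1 : l ≤ h * l := Nat.le_mul_of_pos_left l hh
    rw [hN]; nlinarith
  have hC : 0 < N.choose l := Nat.choose_pos hlN
  have hC' : (0 : ℝ) < N.choose l := by exact_mod_cast hC
  have hSc : S.card = N.choose l := by simp [hS]
  set β : ℝ := (Real.sqrt (N.choose l))⁻¹ with hβ
  have hβ2 : β ^ 2 = (N.choose l : ℝ)⁻¹ := by rw [hβ, inv_pow, Real.sq_sqrt hC'.le]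
  have hcount := count_choose l h N hl hh hN
  set M := (evenTuples (Fin (2 * h)) (Fin N) l).card
  have hint : ∫ x in (0:ℝ)..1, |∑ A ∈ S, β * walsh A x| ^ (2 * h) =
      (∑ X ∈ (Finset.Icc 1 N).powerset, (∑ A ∈ S, β * signProd (cubeSign X) A) ^ (2 * h)) /
        2 ^ N := by
    simp_rw [(even_two_mul h).pow_abs]
    have := integral_pow_eq (Finset.Icc 1 N) (by simp) S
      (fun A hA => (Finset.mem_powersetCard.1 hA).1) (fun _ => β) (2 * h)
    rw [this]; simp
  have hlow : ((2 * h).factorial * muStandard l (2 * h) : ℕ) / (12 : ℝ) ^ h ≤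
      ∫ x in (0:ℝ)..1, |∑ A ∈ S, β * walsh A x| ^ (2 * h) := by
    rw [hint]
    simp_rw [← Finset.mul_sum, mul_pow]
    rw [← Finset.mul_sum, pow_mul, hβ2, inv_pow]
    have h1 := cube_lower l (2 * h) N
    have h2 : (((2 * h).factorial * muStandard l (2 * h) : ℕ) : ℝ) * (N.choose l : ℝ) ^ h ≤
        12 ^ h * M := by exact_mod_cast hcount
    rw [div_le_div_iff₀ (by positivity) (by positivity)]
    calc _ = (((N.choose l : ℝ) ^ h)⁻¹ * 2 ^ N) *
          ((((2 * h).factorial * muStandard l (2 * h) : ℕ) : ℝ) * (N.choose l : ℝ) ^ h) := by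
          field_simp
      _ ≤ (((N.choose l : ℝ) ^ h)⁻¹ * 2 ^ N) * (12 ^ h * M) :=
          mul_le_mul_of_nonneg_left h2 (by positivity)
      _ = ((N.choose l : ℝ) ^ h)⁻¹ * (M * 2 ^ N) * 12 ^ h := by ring
      _ ≤ _ := by
          refine mul_le_mul_of_nonneg_right (mul_le_mul_of_nonneg_left h1 ?_) ?_ <;> positivity
  refine le_trans ?_ (le_csSup (bddAbove_norms l (2 * h) hp hpe)
    ⟨S, fun _ => β, ?_, ?_, rfl⟩)
  · have h12 : (2 * Real.sqrt 3) = ((12 : ℝ) ^ h) ^ ((1 : ℝ) / (2 * h : ℕ)) := by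
      have e : (12 : ℝ) ^ h = (2 * Real.sqrt 3) ^ (2 * h) := by
        rw [pow_mul, mul_pow, Real.sq_sqrt (by norm_num)]; norm_num
      rw [e, one_div, Real.pow_rpow_inv_natCast (by positivity) (by omega)]
    rw [h12, ← Real.div_rpow (by positivity) (by positivity)]
    exact Real.rpow_le_rpow (by positivity) hlow (by positivity)
  · intro A hA
    obtain ⟨h1, h2⟩ := Finset.mem_powersetCard.1 hA
    exact ⟨h2, fun n hn => (Finset.mem_Icc.1 (h1 hn)).1⟩
  · rw [Finset.sum_const, hSc, nsmul_eq_mul, hβ2, mul_inv_cancel₀ hC'.ne']
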